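/- Let m ≥ 0 and A = A_{2m+1}(x,y). Then the Cartan matrix of A is given by dim_k e₁Ae₁ = F_{2m+1}(y, Sx), dim_k e₁Ae₂ = F_{2m}(y, Sx), dim_k e₂Ae₁ = F_{2m+2}(x, y), and dim_k e₂Ae₂ = F_{2m+1}(x, y). -/

import Mathlib

/-!
Give the arrow `α_{i,j}` height `2i-2` and `β_{i,j}` height `2i-1`. The zero relations say
exactly that a nonzero path, written in composition order, has strictly increasing heights from
left to right; since `α` and `β` alternate, so do the parities. These *normal words* form a basis
of `A_n(x,y)`.

* They span: the span of the normal words with a given left end contains that trivial path and is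
  stable under right multiplication by every generator, hence is the right ideal generated by the
  trivial path (`wordSpan_mul`); multiplying by `e_t` on the right selects the words ending at `t`
  (`cornerSpace_eq_span`).
* They are independent: `A_n(x,y)` acts from the right on the free vector space on words, a
  generator extending a word when the result is normal and killing it otherwise. A normal word
  sends its left end to itself (`wordAct_eval`).

It remains to count the normal words with a given left end whose last height is at most `p - 2` and
has the parity of `p` (a trivial path being given height `-1` at the vertex `2` and `0` at the
vertex `1`). Apart from the trivial path, either the last height is at most `p - 4`, or it equals
`p - 2` and deleting the last arrow leaves a word counted for `p - 1`.
This is the Fibonacci recursion. Words starting at the vertex `1` never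
use an arrow `α_{1,j}`, which accounts for the shift `Sx`.
-/

/-!
Statement 9: the Cartan matrix of `A = A_{2m+1}(x,y)` (`m ≥ 0`):
`dim e₁Ae₁ = F_{2m+1}(y,Sx)`, `dim e₁Ae₂ = F_{2m}(y,Sx)`, `dim e₂Ae₁ = F_{2m+2}(x,y)`
and `dim e₂Ae₂ = F_{2m+1}(x,y)`, where the `F_p` are the generalized Fibonacci numbers
and `Sx` is the shifted sequence.
-/

noncomputable section
set_option linter.unusedSectionVars false

/-- The generators of the path algebra of the quiver of `A_n(x,y)`: trivial paths `e₁`, `e₂`,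
arrows `a i j = α_{i+1,j+1} : 1 → 2` for `i < ⌊(n+1)/2⌋`, `j < x_{i+1}`, and arrows
`b i j = β_{i+1,j+1} : 2 → 1` for `i < ⌊n/2⌋`, `j < y_{i+1}`.  (The sequences of positive
integers `x = (x₁, x₂, …)` and `y = (y₁, y₂, …)` are encoded as functions `ℕ → ℕ` with
`x i = x_{i+1}` and `y i = y_{i+1}`.) -/
inductive AGen (x y : ℕ → ℕ) (n : ℕ) : Type
  | e1 : AGen x y n
  | e2 : AGen x y n
  | a (i : Fin ((n + 1) / 2)) (j : Fin (x i)) : AGen x y n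
  | b (i : Fin (n / 2)) (j : Fin (y i)) : AGen x y n

/-- The relations defining `A_n(x,y)` as a quotient of the free algebra on `AGen x y n`:
the path algebra relations (products are written in composition order: `u * v` means
"first traverse `v`, then `u`") together with the relations `α_{i,j} β_{i',j'} = 0`
(i.e. `a i j * b i' j' = 0`) for `i' < i`, and `β_{i',j'} α_{i,j} = 0`
(i.e. `b i' j' * a i j = 0`) for `i ≤ i'`. -/
inductive ARel (k : Type) [Field k] (x y : ℕ → ℕ) (n : ℕ) :
    FreeAlgebra k (AGen x y n) → FreeAlgebra k (AGen x y n) → Prop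
  | idem1 : ARel k x y n (FreeAlgebra.ι k AGen.e1 * FreeAlgebra.ι k AGen.e1)
      (FreeAlgebra.ι k AGen.e1)
  | idem2 : ARel k x y n (FreeAlgebra.ι k AGen.e2 * FreeAlgebra.ι k AGen.e2)
      (FreeAlgebra.ι k AGen.e2)
  | orth12 : ARel k x y n (FreeAlgebra.ι k AGen.e1 * FreeAlgebra.ι k AGen.e2) 0
  | orth21 : ARel k x y n (FreeAlgebra.ι k AGen.e2 * FreeAlgebra.ι k AGen.e1) 0
  | sum : ARel k x y n (FreeAlgebra.ι k AGen.e1 + FreeAlgebra.ι k AGen.e2) 1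
  | a_tgt (i) (j) : ARel k x y n (FreeAlgebra.ι k AGen.e2 * FreeAlgebra.ι k (AGen.a i j))
      (FreeAlgebra.ι k (AGen.a i j))
  | a_src (i) (j) : ARel k x y n (FreeAlgebra.ι k (AGen.a i j) * FreeAlgebra.ι k AGen.e1)
      (FreeAlgebra.ι k (AGen.a i j))
  | b_tgt (i) (j) : ARel k x y n (FreeAlgebra.ι k AGen.e1 * FreeAlgebra.ι k (AGen.b i j))
      (FreeAlgebra.ι k (AGen.b i j))
  | b_src (i) (j) : ARel k x y n (FreeAlgebra.ι k (AGen.b i j) * FreeAlgebra.ι k AGen.e2)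
      (FreeAlgebra.ι k (AGen.b i j))
  | ab (i : Fin ((n + 1) / 2)) (j : Fin (x i)) (i' : Fin (n / 2)) (j' : Fin (y i'))
      (h : (i' : ℕ) < (i : ℕ)) :
      ARel k x y n (FreeAlgebra.ι k (AGen.a i j) * FreeAlgebra.ι k (AGen.b i' j')) 0
  | ba (i : Fin ((n + 1) / 2)) (j : Fin (x i)) (i' : Fin (n / 2)) (j' : Fin (y i'))
      (h : (i : ℕ) ≤ (i' : ℕ)) :
      ARel k x y n (FreeAlgebra.ι k (AGen.b i' j') * FreeAlgebra.ι k (AGen.a i j)) 0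

/-- The algebra `A_n(x,y)`. -/
def AAlgebra (k : Type) [Field k] (x y : ℕ → ℕ) (n : ℕ) : Type := RingQuot (ARel k x y n)

instance (k : Type) [Field k] (x y : ℕ → ℕ) (n : ℕ) : Ring (AAlgebra k x y n) :=
  inferInstanceAs (Ring (RingQuot (ARel k x y n)))

instance (k : Type) [Field k] (x y : ℕ → ℕ) (n : ℕ) : Algebra k (AAlgebra k x y n) :=
  inferInstanceAs (Algebra k (RingQuot (ARel k x y n)))

variable (k : Type) [Field k] (x y : ℕ → ℕ) (n : ℕ)

/-- The idempotent `e₁ ∈ A_n(x,y)`. -/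
def Ae1 : AAlgebra k x y n := RingQuot.mkAlgHom k (ARel k x y n) (FreeAlgebra.ι k AGen.e1)

/-- The idempotent `e₂ ∈ A_n(x,y)`. -/
def Ae2 : AAlgebra k x y n := RingQuot.mkAlgHom k (ARel k x y n) (FreeAlgebra.ι k AGen.e2)

/-- The arrow `α_{i+1,j+1} ∈ A_n(x,y)`. -/
def Aalpha (i : Fin ((n + 1) / 2)) (j : Fin (x i)) : AAlgebra k x y n :=
  RingQuot.mkAlgHom k (ARel k x y n) (FreeAlgebra.ι k (AGen.a i j))

/-- The arrow `β_{i+1,j+1} ∈ A_n(x,y)`. -/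
def Abeta (i : Fin (n / 2)) (j : Fin (y i)) : AAlgebra k x y n :=
  RingQuot.mkAlgHom k (ARel k x y n) (FreeAlgebra.ι k (AGen.b i j))
/-- The generalized Fibonacci numbers `F_p(x,y)`:  `F₀ = 0`, `F₁ = 1`,
`F_{2m} = F_{2m-2} + F_{2m-1}·x_m` and `F_{2m+1} = F_{2m-1} + F_{2m}·y_m` (`m ≥ 1`);
the sequences are encoded as functions `ℕ → ℕ` with `x i = x_{i+1}`, `y i = y_{i+1}`. -/
def genFib (x y : ℕ → ℕ) : ℕ → ℕ
  | 0 => 0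
  | 1 => 1
  | n + 2 =>
    if n % 2 = 0 then genFib x y n + genFib x y (n + 1) * x (n / 2)
    else genFib x y n + genFib x y (n + 1) * y (n / 2)

/-- The shift `Sx = (x₂, x₃, …)` of a sequence `x = (x₁, x₂, …)`. -/
def shiftSeq (x : ℕ → ℕ) : ℕ → ℕ := fun i => x (i + 1)

/-- The `k`-subspace `e_i A e_j` of an algebra `A` (whose dimensions are the entries of
the Cartan matrix). -/
def cornerSpace (k : Type) {A : Type} [Field k] [Ring A] [Algebra k A] (u v : A) : Submodule k A :=
  LinearMap.range ((LinearMap.mulLeft k u).comp (LinearMap.mulRight k v))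

/-! ### Normal words and their number -/

/-- Candidate basis paths, written in composition order and grown on the right. The arrow
`α_{i+1,j+1}` has height `2i` and `β_{i+1,j+1}` has height `2i+1`; `snoc w q j` is the path `w`
followed on the right by the `j`-th arrow of height `q`. The trivial path `nil s` is `e₂` for
`s = 0` and `e₁` for `s = 1`. -/
inductive NWord : Type
  | nil (s : ℕ) : NWord
  | snoc (w : NWord) (q j : ℕ) : NWord

/-- The least height that the next arrow on the right may have. Its parity records the right
end of the word: even for the vertex `2`, odd for the vertex `1`. -/
def NWord.top : NWord → ℕ
  | .nil s => s
  | .snoc _ q _ => q + 1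

/-- The number of arrows of height `q`. -/
def arrowCount (q : ℕ) : ℕ := if q % 2 = 0 then x (q / 2) else y (q / 2)

/-- Normal words with left end `s`: composable words along which the heights strictly increase
from left to right. -/
def NWord.Valid (s : ℕ) : NWord → Prop
  | .nil s' => s' = s
  | .snoc w q j => w.Valid s ∧ w.top ≤ q ∧ w.top % 2 = q % 2 ∧ j < arrowCount x y q

open Classical in
/-- The normal words `w` with left end `s` such that `w.top < p` and `w.top` has the parity of
`p + 1` (see `mem_wordSet`), arranged according to the Fibonacci recursion. -/
def wordSet (s : ℕ) : ℕ → Finset NWord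
  | 0 => ∅
  | 1 => if s = 0 then {.nil 0} else ∅
  | p + 2 =>
    (wordSet s p ∪ (wordSet s (p + 1) ×ˢ Finset.range (arrowCount x y p)).image
      (fun t => .snoc t.1 p t.2)) ∪ (if s = p + 1 then {.nil s} else ∅)

theorem mem_wordSet (s p : ℕ) (w : NWord) :
    w ∈ wordSet x y s p ↔ w.Valid x y s ∧ w.top < p ∧ w.top % 2 = (p + 1) % 2 := by
  induction p using Nat.strong_induction_on generalizing w with
  | _ p ih =>
  match p with
  | 0 => simp [wordSet]
  | 1 =>
    cases w with
    | nil s' =>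
      by_cases h : s = 0
      · subst h; simp +contextual [wordSet, NWord.Valid, NWord.top]
      · simp [wordSet, NWord.Valid, NWord.top, h]; omega
    | snoc w q j =>
      by_cases h : s = 0 <;> simp [wordSet, NWord.top, h]
  | p + 2 =>
    have h1 := fun w => ih p (by omega) w
    have h2 := fun w => ih (p + 1) (by omega) w
    simp only [wordSet, Finset.mem_union, h1, Finset.mem_image, Finset.mem_product, h2,
      Finset.mem_range, Prod.exists]
    cases w with
    | nil s' =>
      by_cases h : s = p + 1
      · simp [NWord.Valid, NWord.top, h]; omega
      · simp [NWord.Valid, NWord.top, h]; omega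
    | snoc w q j =>
      have h0 : NWord.snoc w q j ∉ (if s = p + 1 then {NWord.nil s} else (∅ : Finset NWord)) := by
        split_ifs <;> simp
      simp only [h0, or_false, NWord.top, NWord.Valid, NWord.snoc.injEq]
      constructor
      · rintro (h | ⟨w', j', ⟨⟨h3, h4, h5⟩, h6⟩, rfl, rfl, rfl⟩)
        · refine ⟨h.1, ?_, ?_⟩ <;> omega
        · exact ⟨⟨h3, by omega, by omega, h6⟩, by omega, by omega⟩
      · rintro ⟨⟨h3, h4, h5, h6⟩, h7, h8⟩
        by_cases hq : q = p
        · subst hq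
          exact .inr ⟨w, j, ⟨⟨h3, by omega, by omega⟩, h6⟩, rfl, rfl, rfl⟩
        · exact .inl ⟨⟨h3, h4, h5, h6⟩, by omega, by omega⟩

theorem card_wordSet_step (s p : ℕ) : (wordSet x y s (p + 2)).card =
    (wordSet x y s p).card + (wordSet x y s (p + 1)).card * arrowCount x y p +
      (if s = p + 1 then 1 else 0) := by
  classical
  rw [wordSet, Finset.card_union_of_disjoint, Finset.card_union_of_disjoint,
    Finset.card_image_of_injective, Finset.card_product, Finset.card_range]
  · split_ifs <;> simp
  · rintro ⟨w, j⟩ ⟨w', j'⟩ h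
    simp only [NWord.snoc.injEq] at h
    simp [h.1, h.2.2]
  · rw [Finset.disjoint_left]
    intro w hw hw'
    obtain ⟨t, -, rfl⟩ := Finset.mem_image.1 hw'
    have := ((mem_wordSet x y s p _).1 hw).2.1
    simp [NWord.top] at this
  · rw [Finset.disjoint_left]
    intro w hw hw'
    split_ifs at hw' with h
    · rw [Finset.mem_singleton] at hw'
      subst hw'
      rcases Finset.mem_union.1 hw with hw | hw
      · have := ((mem_wordSet x y s p _).1 hw).2.1
        simp only [NWord.top] at this
        omega
      · simp at hw
    · simp at hw'

theorem card_wordSet_zero (p : ℕ) : (wordSet x y 0 p).card = genFib x y p := by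
  induction p using Nat.strong_induction_on with
  | _ p ih =>
  match p with
  | 0 => simp [wordSet, genFib]
  | 1 => simp [wordSet, genFib]
  | p + 2 =>
    rw [card_wordSet_step, ih p (by omega), ih (p + 1) (by omega), genFib, arrowCount]
    rcases Nat.mod_two_eq_zero_or_one p with h | h
    · simp [h]
    · simp [h]

theorem card_wordSet_one (p : ℕ) :
    (wordSet x y 1 (p + 1)).card = genFib y (shiftSeq x) p := by
  induction p using Nat.strong_induction_on with
  | _ p ih =>
  match p with
  | 0 => simp [wordSet, genFib]
  | 1 => rw [card_wordSet_step]; simp [wordSet, genFib]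
  | p + 2 =>
    rw [card_wordSet_step, ih p (by omega), ih (p + 1) (by omega), genFib, arrowCount, shiftSeq]
    rcases Nat.mod_two_eq_zero_or_one p with h | h
    · rw [if_neg (by omega), if_neg (by omega), if_pos h, show (p + 1) / 2 = p / 2 by omega]
      omega
    · rw [if_pos (by omega), if_neg (by omega), if_neg (by omega),
        show (p + 1) / 2 = p / 2 + 1 by omega]
      omega

/-! ### Normal words span the corners -/

/-- The idempotent of a vertex labelled by a parity: `e₂` for even, `e₁` for odd. -/
def vtx (t : ℕ) : AAlgebra k x y n := if t % 2 = 0 then Ae2 k x y n else Ae1 k x y n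

/-- The `j`-th arrow of height `q` in `A_n(x,y)`, and `0` if there is no such arrow. -/
def arr (q j : ℕ) : AAlgebra k x y n :=
  if q % 2 = 0 then
    if h : q / 2 < (n + 1) / 2 ∧ j < x (q / 2) then Aalpha k x y n ⟨q / 2, h.1⟩ ⟨j, h.2⟩ else 0
  else
    if h : q / 2 < n / 2 ∧ j < y (q / 2) then Abeta k x y n ⟨q / 2, h.1⟩ ⟨j, h.2⟩ else 0

/-- The quotient map from the free algebra, with values in `AAlgebra`. -/
def qmap : FreeAlgebra k (AGen x y n) →ₐ[k] AAlgebra k x y n :=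
  RingQuot.mkAlgHom k (ARel k x y n)

theorem qmap_surjective : Function.Surjective (qmap k x y n) :=
  RingQuot.mkAlgHom_surjective k (ARel k x y n)

theorem qmap_rel {u v : FreeAlgebra k (AGen x y n)} (h : ARel k x y n u v) :
    qmap k x y n u = qmap k x y n v :=
  RingQuot.mkAlgHom_rel k h

theorem qmap_e1 : qmap k x y n (FreeAlgebra.ι k AGen.e1) = Ae1 k x y n := rfl

theorem qmap_e2 : qmap k x y n (FreeAlgebra.ι k AGen.e2) = Ae2 k x y n := rfl

theorem qmap_a (i j) : qmap k x y n (FreeAlgebra.ι k (AGen.a i j)) = Aalpha k x y n i j := rfl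

theorem qmap_b (i j) : qmap k x y n (FreeAlgebra.ι k (AGen.b i j)) = Abeta k x y n i j := rfl

theorem arr_even (i : Fin ((n + 1) / 2)) (j : Fin (x i)) :
    arr k x y n (2 * i) j = Aalpha k x y n i j := by
  obtain ⟨i, hi⟩ := i
  obtain ⟨j, hj⟩ := j
  have h : 2 * i / 2 = i := by omega
  simp only [arr, h, Nat.mul_mod_right, if_true]
  rw [dif_pos ⟨hi, hj⟩]
  have key : ∀ (i' : ℕ) (_ : i' = i) (h1 : i' < (n + 1) / 2) (h2 : j < x i'),
      Aalpha k x y n ⟨i', h1⟩ ⟨j, h2⟩ = Aalpha k x y n ⟨i, hi⟩ ⟨j, hj⟩ := by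
    rintro _ rfl _ _
    rfl
  exact key _ h _ _

theorem arr_odd (i : Fin (n / 2)) (j : Fin (y i)) :
    arr k x y n (2 * i + 1) j = Abeta k x y n i j := by
  obtain ⟨i, hi⟩ := i
  obtain ⟨j, hj⟩ := j
  have h : (2 * i + 1) / 2 = i := by omega
  have h' : ¬ (2 * i + 1) % 2 = 0 := by omega
  simp only [arr, h, h', if_false]
  rw [dif_pos ⟨hi, hj⟩]
  have key : ∀ (i' : ℕ) (_ : i' = i) (h1 : i' < n / 2) (h2 : j < y i'),
      Abeta k x y n ⟨i', h1⟩ ⟨j, h2⟩ = Abeta k x y n ⟨i, hi⟩ ⟨j, hj⟩ := by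
    rintro _ rfl _ _
    rfl
  exact key _ h _ _

theorem arr_cases (q j : ℕ) :
    arr k x y n q j = 0 ∨
    (∃ (i : Fin ((n + 1) / 2)) (j' : Fin (x i)), q = 2 * i ∧ j = j' ∧
      arr k x y n q j = Aalpha k x y n i j') ∨
    (∃ (i : Fin (n / 2)) (j' : Fin (y i)), q = 2 * i + 1 ∧ j = j' ∧
      arr k x y n q j = Abeta k x y n i j') := by
  by_cases h0 : arr k x y n q j = 0
  · exact .inl h0
  right
  unfold arr at h0 ⊢
  split_ifs at h0 ⊢ with h1 h2 h3
  · exact .inl ⟨⟨q / 2, h2.1⟩, ⟨j, h2.2⟩, by simp only; omega, rfl, rfl⟩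
  · exact absurd rfl h0
  · exact .inr ⟨⟨q / 2, h3.1⟩, ⟨j, h3.2⟩, by simp only; omega, rfl, rfl⟩
  · exact absurd rfl h0

theorem vtx_mul_vtx (s t : ℕ) :
    vtx k x y n s * vtx k x y n t = if s % 2 = t % 2 then vtx k x y n s else 0 := by
  have h11 : Ae1 k x y n * Ae1 k x y n = Ae1 k x y n := by
    simpa [qmap_e1] using qmap_rel k x y n ARel.idem1
  have h22 : Ae2 k x y n * Ae2 k x y n = Ae2 k x y n := by
    simpa [qmap_e2] using qmap_rel k x y n ARel.idem2
  have h12 : Ae1 k x y n * Ae2 k x y n = 0 := by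
    simpa [qmap_e1, qmap_e2] using qmap_rel k x y n ARel.orth12
  have h21 : Ae2 k x y n * Ae1 k x y n = 0 := by
    simpa [qmap_e1, qmap_e2] using qmap_rel k x y n ARel.orth21
  rcases Nat.mod_two_eq_zero_or_one s with hs | hs <;>
    rcases Nat.mod_two_eq_zero_or_one t with ht | ht <;>
    simp [vtx, hs, ht, h11, h22, h12, h21]

theorem vtx_mul_arr (q j : ℕ) : vtx k x y n q * arr k x y n q j = arr k x y n q j := by
  rcases arr_cases k x y n q j with h | ⟨i, j, rfl, rfl, h⟩ | ⟨i, j, rfl, rfl, h⟩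
  · simp [h]
  · rw [h]
    simpa [vtx, qmap_e2, qmap_a] using qmap_rel k x y n (ARel.a_tgt i j)
  · rw [h]
    have h' : ¬ (2 * (i : ℕ) + 1) % 2 = 0 := by omega
    simpa [vtx, h', qmap_e1, qmap_b] using qmap_rel k x y n (ARel.b_tgt i j)

theorem arr_mul_vtx (q j : ℕ) : arr k x y n q j * vtx k x y n (q + 1) = arr k x y n q j := by
  rcases arr_cases k x y n q j with h | ⟨i, j, rfl, rfl, h⟩ | ⟨i, j, rfl, rfl, h⟩
  · simp [h]
  · rw [h]
    have h' : ¬ (2 * (i : ℕ) + 1) % 2 = 0 := by omega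
    simpa [vtx, h', qmap_e1, qmap_a] using qmap_rel k x y n (ARel.a_src i j)
  · rw [h]
    have h' : (2 * (i : ℕ) + 1 + 1) % 2 = 0 := by omega
    simpa [vtx, h', qmap_e2, qmap_b] using qmap_rel k x y n (ARel.b_src i j)

/-- The defining zero relations say that heights increase strictly along a nonzero path; for
arrows of equal parity the product already vanishes because they are not composable. -/
theorem arr_mul_arr (q j q' j' : ℕ) (h : q' ≤ q) :
    arr k x y n q j * arr k x y n q' j' = 0 := by
  by_cases hp : q % 2 = q' % 2
  · rw [← arr_mul_vtx, ← vtx_mul_arr k x y n q', mul_assoc, ← mul_assoc (vtx k x y n _),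
      vtx_mul_vtx, if_neg (by omega)]
    simp
  rcases arr_cases k x y n q j with h1 | ⟨i, j, rfl, rfl, h1⟩ | ⟨i, j, rfl, rfl, h1⟩
  · simp [h1]
  · rcases arr_cases k x y n q' j' with h2 | ⟨i', j', rfl, rfl, h2⟩ | ⟨i', j', rfl, rfl, h2⟩
    · simp [h2]
    · omega
    · rw [h1, h2]
      simpa [qmap_a, qmap_b] using qmap_rel k x y n (ARel.ab i j i' j' (by omega))
  · rcases arr_cases k x y n q' j' with h2 | ⟨i', j', rfl, rfl, h2⟩ | ⟨i', j', rfl, rfl, h2⟩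
    · simp [h2]
    · rw [h1, h2]
      simpa [qmap_a, qmap_b] using qmap_rel k x y n (ARel.ba i' j' i j (by omega))
    · omega

/-- The element of `A_n(x,y)` represented by a word. -/
def NWord.eval : NWord → AAlgebra k x y n
  | .nil s => vtx k x y n s
  | .snoc w q j => w.eval * arr k x y n q j

theorem eval_mul_vtx (w : NWord) (t : ℕ) : w.eval k x y n * vtx k x y n t =
    if w.top % 2 = t % 2 then w.eval k x y n else 0 := by
  cases w with
  | nil s => exact vtx_mul_vtx k x y n s t
  | snoc w q j =>
    change _ * arr k x y n q j * _ =
      if (q + 1) % 2 = t % 2 then _ * arr k x y n q j else 0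
    rw [← arr_mul_vtx k x y n q j, mul_assoc, mul_assoc, vtx_mul_vtx]
    by_cases h : (q + 1) % 2 = t % 2 <;> simp [h]

theorem vtx_mul_eval (s : ℕ) (w : NWord) (hw : w.Valid x y s) :
    vtx k x y n s * w.eval k x y n = w.eval k x y n := by
  induction w with
  | nil s' =>
    obtain rfl : s' = s := hw
    simp [NWord.eval, vtx_mul_vtx]
  | snoc w q j ih => rw [NWord.eval, ← mul_assoc, ih hw.1]

theorem eval_mul_arr_eq_zero (s : ℕ) (hs : s < 2) (w : NWord) (hw : w.Valid x y s) (q j : ℕ)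
    (h : ¬ (w.top ≤ q ∧ w.top % 2 = q % 2)) : w.eval k x y n * arr k x y n q j = 0 := by
  by_cases hp : w.top % 2 = q % 2
  · cases w with
    | nil s' =>
      obtain rfl : s' = s := hw
      simp only [NWord.top] at h hp
      omega
    | snoc w q' j' =>
      simp only [NWord.top] at h hp
      rw [NWord.eval, mul_assoc, arr_mul_arr _ _ _ _ _ _ _ _ (by omega), mul_zero]
  · rw [← vtx_mul_arr, ← mul_assoc, eval_mul_vtx, if_neg hp, zero_mul]

/-- The span of the normal words with left end `s` (both right ends). -/
def wordSpan (s : ℕ) : Submodule k (AAlgebra k x y n) :=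
  Submodule.span k {a | ∃ w : NWord, w.Valid x y s ∧ w.top ≤ n ∧ w.eval k x y n = a}

theorem wordSpan_mul_arr (s : ℕ) (hs : s < 2) (q j : ℕ) (hq : q < n) (hj : j < arrowCount x y q)
    (u : AAlgebra k x y n) (hu : u ∈ wordSpan k x y n s) :
    u * arr k x y n q j ∈ wordSpan k x y n s := by
  induction hu using Submodule.span_induction with
  | zero => simp
  | add a b _ _ ha hb => rw [add_mul]; exact add_mem ha hb
  | smul c a _ ha => rw [smul_mul_assoc]; exact Submodule.smul_mem _ _ ha
  | mem a ha =>
    obtain ⟨w, hw, hn, rfl⟩ := ha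
    by_cases h : w.top ≤ q ∧ w.top % 2 = q % 2
    · exact Submodule.subset_span ⟨.snoc w q j, ⟨hw, h.1, h.2, hj⟩, hq, rfl⟩
    · rw [eval_mul_arr_eq_zero k x y n s hs w hw q j h]
      exact zero_mem _

theorem wordSpan_mul_vtx (s t : ℕ)
    (u : AAlgebra k x y n) (hu : u ∈ wordSpan k x y n s) :
    u * vtx k x y n t ∈ wordSpan k x y n s := by
  induction hu using Submodule.span_induction with
  | zero => simp
  | add a b _ _ ha hb => rw [add_mul]; exact add_mem ha hb
  | smul c a _ ha => rw [smul_mul_assoc]; exact Submodule.smul_mem _ _ ha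
  | mem a ha =>
    obtain ⟨w, hw, hn, rfl⟩ := ha
    rw [eval_mul_vtx]
    split_ifs
    · exact Submodule.subset_span ⟨w, hw, hn, rfl⟩
    · exact zero_mem _

/-- The span of the normal words with a fixed left end is a right ideal. -/
theorem wordSpan_mul (s : ℕ) (hs : s < 2) (r : AAlgebra k x y n) :
    ∀ u ∈ wordSpan k x y n s, u * r ∈ wordSpan k x y n s := by
  obtain ⟨r, rfl⟩ := qmap_surjective k x y n r
  induction r using FreeAlgebra.induction with
  | grade0 c =>
    intro u hu
    rw [AlgHom.commutes, ← Algebra.commutes, ← Algebra.smul_def]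
    exact Submodule.smul_mem _ _ hu
  | grade1 g =>
    intro u hu
    cases g with
    | e1 => exact wordSpan_mul_vtx k x y n s 1 u hu
    | e2 => exact wordSpan_mul_vtx k x y n s 0 u hu
    | a i j =>
      rw [qmap_a, ← arr_even]
      exact wordSpan_mul_arr k x y n s hs _ _ (by omega) (by simp [arrowCount]) u hu
    | b i j =>
      rw [qmap_b, ← arr_odd]
      refine wordSpan_mul_arr k x y n s hs _ _ (by omega) ?_ u hu
      have h1 : ¬ (2 * (i : ℕ) + 1) % 2 = 0 := by omega
      have h2 : (2 * (i : ℕ) + 1) / 2 = i := by omega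
      rw [arrowCount, if_neg h1, h2]
      exact j.2
  | mul a b ha hb =>
    intro u hu
    rw [map_mul, ← mul_assoc]
    exact hb _ (ha _ hu)
  | add a b ha hb =>
    intro u hu
    rw [map_add, mul_add]
    exact add_mem (ha _ hu) (hb _ hu)

theorem cornerSpace_eq_span (s t p : ℕ) (hs : s ≤ n) (hs2 : s < 2) (hp : p ≤ n + 1)
    (hp' : n ≤ p) (ht : t % 2 = (p + 1) % 2) :
    cornerSpace k (vtx k x y n s) (vtx k x y n t) =
      Submodule.span k (Set.range fun w : wordSet x y s p => w.1.eval k x y n) := by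
  apply le_antisymm
  · rintro _ ⟨r, rfl⟩
    have h : vtx k x y n s * r ∈ wordSpan k x y n s :=
      wordSpan_mul k x y n s hs2 r _ (Submodule.subset_span ⟨.nil s, rfl, hs, rfl⟩)
    simp only [LinearMap.comp_apply, LinearMap.mulLeft_apply, LinearMap.mulRight_apply]
    rw [← mul_assoc]
    generalize vtx k x y n s * r = u at h
    induction h using Submodule.span_induction with
    | zero => simp
    | add a b _ _ ha hb => rw [add_mul]; exact add_mem ha hb
    | smul c a _ ha => rw [smul_mul_assoc]; exact Submodule.smul_mem _ _ ha
    | mem a ha =>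
      obtain ⟨w, hw, hn, rfl⟩ := ha
      rw [eval_mul_vtx]
      split_ifs with h
      · exact Submodule.subset_span
          ⟨⟨w, (mem_wordSet x y s p w).2 ⟨hw, by omega, by omega⟩⟩, rfl⟩
      · exact zero_mem _
  · rw [Submodule.span_le]
    rintro _ ⟨⟨w, hw⟩, rfl⟩
    obtain ⟨h1, h2, h3⟩ := (mem_wordSet x y s p w).1 hw
    refine ⟨w.eval k x y n, ?_⟩
    simp only [LinearMap.comp_apply, LinearMap.mulLeft_apply, LinearMap.mulRight_apply]
    rw [eval_mul_vtx, if_pos (by omega), vtx_mul_eval k x y n s w h1]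

/-! ### The right action on words and linear independence -/

/-- Right multiplication of a word by a generator: the extended word if the result is again
normal, and `0` otherwise. -/
def stepVec (w : NWord) : AGen x y n → (NWord →₀ k)
  | .e1 => if w.top % 2 = 1 then Finsupp.single w 1 else 0
  | .e2 => if w.top % 2 = 0 then Finsupp.single w 1 else 0
  | .a i j => if w.top ≤ 2 * i ∧ w.top % 2 = 0 then Finsupp.single (.snoc w (2 * i) j) 1 else 0
  | .b i j =>
    if w.top ≤ 2 * i + 1 ∧ w.top % 2 = 1 then Finsupp.single (.snoc w (2 * i + 1) j) 1 else 0

/-- The linear extension of `stepVec`. -/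
def stepMap (g : AGen x y n) : Module.End k (NWord →₀ k) :=
  Finsupp.linearCombination k fun w => stepVec k x y n w g

theorem stepMap_single (g : AGen x y n) (w : NWord) :
    stepMap k x y n g (Finsupp.single w 1) = stepVec k x y n w g := by
  simp [stepMap]

/-- The right action of the free algebra on the space spanned by all words. -/
def freeAct : FreeAlgebra k (AGen x y n) →ₐ[k] (Module.End k (NWord →₀ k))ᵐᵒᵖ :=
  FreeAlgebra.lift k fun g => MulOpposite.op (stepMap k x y n g)

theorem freeAct_rel {u v : FreeAlgebra k (AGen x y n)} (h : ARel k x y n u v) :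
    freeAct k x y n u = freeAct k x y n v := by
  apply MulOpposite.unop_injective
  apply Finsupp.lhom_ext'
  intro w
  apply LinearMap.ext_ring
  have hpar : ∀ i : ℕ, (2 * i + 1 + 1) % 2 = 0 := by omega
  rcases Nat.mod_two_eq_zero_or_one w.top with hw | hw <;> cases h <;>
    simp [freeAct, stepMap_single, stepVec, hw] <;>
    (try split_ifs) <;> simp [stepMap_single, stepVec, NWord.top, hpar] <;> omega

/-- The right action of `A_n(x,y)` on the space spanned by all words. -/
def wordAct : AAlgebra k x y n →ₐ[k] (Module.End k (NWord →₀ k))ᵐᵒᵖ :=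
  RingQuot.liftAlgHom k ⟨freeAct k x y n, fun _ _ h => freeAct_rel k x y n h⟩

theorem wordAct_qmap (g : AGen x y n) :
    (wordAct k x y n (qmap k x y n (FreeAlgebra.ι k g))).unop = stepMap k x y n g := by
  have h : wordAct k x y n (qmap k x y n (FreeAlgebra.ι k g)) =
      freeAct k x y n (FreeAlgebra.ι k g) :=
    RingQuot.liftAlgHom_mkAlgHom_apply k (freeAct k x y n) _ _
  rw [h]
  simp [freeAct]

theorem wordAct_arr (q j : ℕ) (w : NWord) (hq : q < n) (hj : j < arrowCount x y q)
    (h : w.top ≤ q) (h' : w.top % 2 = q % 2) :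
    (wordAct k x y n (arr k x y n q j)).unop (Finsupp.single w 1) =
      Finsupp.single (.snoc w q j) 1 := by
  rcases Nat.mod_two_eq_zero_or_one q with hp | hp
  · obtain ⟨i, rfl⟩ : ∃ i, q = 2 * i := ⟨q / 2, by omega⟩
    have hj' : j < x i := by simpa [arrowCount] using hj
    have := arr_even k x y n ⟨i, by omega⟩ ⟨j, hj'⟩
    simp only at this
    rw [this, ← qmap_a, wordAct_qmap, stepMap_single, stepVec, if_pos ⟨h, by omega⟩]
  · obtain ⟨i, rfl⟩ : ∃ i, q = 2 * i + 1 := ⟨q / 2, by omega⟩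
    have h2 : (2 * i + 1) / 2 = i := by omega
    have hj' : j < y i := by simpa [arrowCount, hp, h2] using hj
    have := arr_odd k x y n ⟨i, by omega⟩ ⟨j, hj'⟩
    simp only at this
    rw [this, ← qmap_b, wordAct_qmap, stepMap_single, stepVec, if_pos ⟨h, by omega⟩]

/-- A normal word acts on its own left end by reproducing itself, so it can be recovered from the
algebra element it represents. -/
theorem wordAct_eval (s : ℕ) (hs : s < 2) (w : NWord) (hw : w.Valid x y s) (hn : w.top ≤ n) :
    (wordAct k x y n (w.eval k x y n)).unop (Finsupp.single (.nil s) 1) =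
      Finsupp.single w 1 := by
  induction w with
  | nil s' =>
    obtain rfl : s' = s := hw
    obtain rfl | rfl : s' = 0 ∨ s' = 1 := by omega
    · change (wordAct k x y n (Ae2 k x y n)).unop _ = _
      rw [← qmap_e2, wordAct_qmap, stepMap_single]
      simp [stepVec, NWord.top]
    · change (wordAct k x y n (Ae1 k x y n)).unop _ = _
      rw [← qmap_e1, wordAct_qmap, stepMap_single]
      simp [stepVec, NWord.top]
  | snoc w q j ih =>
    obtain ⟨h1, h2, h3, h4⟩ := hw
    simp only [NWord.top] at hn
    rw [NWord.eval, map_mul, MulOpposite.unop_mul, Module.End.mul_apply, ih h1 (by omega),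
      wordAct_arr k x y n q j w (by omega) h4 h2 h3]

theorem linearIndependent_eval (s p : ℕ) (hs : s < 2) (hp : p ≤ n + 1) :
    LinearIndependent k (fun w : wordSet x y s p => w.1.eval k x y n) := by
  let f : AAlgebra k x y n →ₗ[k] (NWord →₀ k) :=
    (LinearMap.applyₗ (Finsupp.single (NWord.nil s) (1 : k))).comp
      ((MulOpposite.opLinearEquiv k).symm.toLinearMap.comp (wordAct k x y n).toLinearMap)
  apply LinearIndependent.of_comp f
  have h : (f ∘ fun w : wordSet x y s p => w.1.eval k x y n) =
      (fun w : NWord => Finsupp.single w (1 : k)) ∘ Subtype.val := by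
    funext ⟨w, hw⟩
    obtain ⟨h1, h2, -⟩ := (mem_wordSet x y s p w).1 hw
    exact wordAct_eval k x y n s hs w h1 (by omega)
  rw [h]
  exact (Finsupp.linearIndependent_single_one k NWord).comp _ Subtype.val_injective

theorem finrank_corner (s t p : ℕ) (hs : s ≤ n) (hs2 : s < 2) (hp : p ≤ n + 1)
    (hp' : n ≤ p) (ht : t % 2 = (p + 1) % 2) :
    Module.finrank k (cornerSpace k (vtx k x y n s) (vtx k x y n t)) =
      (wordSet x y s p).card := by
  rw [cornerSpace_eq_span k x y n s t p hs hs2 hp hp' ht,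
    finrank_span_eq_card (linearIndependent_eval k x y n s p hs2 hp), Fintype.card_coe]

/-- STATEMENT 9: the Cartan matrix of `A_{2m+1}(x,y)` for `m ≥ 0`. -/
theorem AAlgebra_cartan_odd (k : Type) [Field k] (x y : ℕ → ℕ)
    (hx : ∀ i, 0 < x i) (hy : ∀ i, 0 < y i) (m : ℕ) :
    Module.finrank k (cornerSpace k (Ae1 k x y (2 * m + 1)) (Ae1 k x y (2 * m + 1))) =
      genFib y (shiftSeq x) (2 * m + 1) ∧
    Module.finrank k (cornerSpace k (Ae1 k x y (2 * m + 1)) (Ae2 k x y (2 * m + 1))) =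
      genFib y (shiftSeq x) (2 * m) ∧
    Module.finrank k (cornerSpace k (Ae2 k x y (2 * m + 1)) (Ae1 k x y (2 * m + 1))) =
      genFib x y (2 * m + 2) ∧
    Module.finrank k (cornerSpace k (Ae2 k x y (2 * m + 1)) (Ae2 k x y (2 * m + 1))) =
      genFib x y (2 * m + 1) := by
  have h1 : Ae1 k x y (2 * m + 1) = vtx k x y (2 * m + 1) 1 := rfl
  have h2 : Ae2 k x y (2 * m + 1) = vtx k x y (2 * m + 1) 0 := rfl
  rw [h1, h2]
  refine ⟨?_, ?_, ?_, ?_⟩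
  · rw [finrank_corner k x y _ 1 1 (2 * m + 2) (by omega) (by omega) (by omega) (by omega)
      (by omega), card_wordSet_one]
  · rw [finrank_corner k x y _ 1 0 (2 * m + 1) (by omega) (by omega) (by omega) (by omega)
      (by omega), card_wordSet_one]
  · rw [finrank_corner k x y _ 0 1 (2 * m + 2) (by omega) (by omega) (by omega) (by omega)
      (by omega), card_wordSet_zero]
  · rw [finrank_corner k x y _ 0 0 (2 * m + 1) (by omega) (by omega) (by omega) (by omega)
      (by omega), card_wordSet_zero]

end
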